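/- Let h = h(t,z) be a smooth solution of the heat equation ∂ₜh = ∂_z²h on [0,∞) × [0,∞) with h(t,0) = 0 for all t ≥ 0. Define h̃(t,z) = ∂_z h(t,z) + (z/(2(1+t))) h(t,z) and H(t,z) = h̃(t,z) + (z/(2(1+t))) ∫₀^z h̃(t,r) dr. Then: (i) h̃ satisfies (∂ₜ − ∂_z² + 1/(1+t)) h̃ = 0 on (0,∞) × (0,∞) with ∂_z h̃(t,0) = 0; and (ii) H satisfies (∂ₜ − ∂_z² + 2/(1+t)) H = 0 on (0,∞) × (0,∞) with ∂_z H(t,0) = 0. -/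

import Mathlib

open MeasureTheory Filter Set

noncomputable section

/-- The first linearly-good unknown `h̃ = ∂_z h + (z/(2(1+t))) h`. -/
def htilde (h : ℝ → ℝ → ℝ) : ℝ → ℝ → ℝ :=
  fun t z => deriv (h t) z + z / (2 * (1 + t)) * h t z

/-- The second linearly-good unknown `H = h̃ + (z/(2(1+t))) ∫₀^z h̃(t,r) dr`. -/
def bigH (h : ℝ → ℝ → ℝ) : ℝ → ℝ → ℝ :=
  fun t z => htilde h t z + z / (2 * (1 + t)) * ∫ r in (0 : ℝ)..z, htilde h t r

/-!
Write `L_c = ∂ₜ - ∂_z² + c/(1+t)` and `A = ∂_z + z/(2(1+t))`, so that `h̃ = A h`. The commutator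
`[L_c, A] = -A/(1+t)` says that `A` maps solutions of `L_c u = 0` to solutions of
`L_{c+1} u = 0`, and Dirichlet conditions to Neumann conditions. Conversely the primitive
`Φ(t,z) = ∫₀^z h̃(t,r) dr` of a Neumann solution is a Dirichlet solution of the same equation,
and `H = A Φ` because `∂_z Φ = h̃`. Thus both claims are instances of the same fact about `A`.
-/

open Function
open scoped Interval Topology

section PartialDerivatives

variable {E : Type*} [NormedAddCommGroup E] [NormedSpace ℝ E] {u : ℝ → ℝ → E} {m n : WithTop ℕ∞}
  {t z : ℝ}

lemma deriv_eq_zero_of_eqOn_Ici {f : ℝ → E} {a x : ℝ} (hf : EqOn f 0 (Ici a)) (hx : a ≤ x) :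
    deriv f x = 0 := by
  by_cases hdiff : DifferentiableAt ℝ f x
  · rw [← hdiff.derivWithin (uniqueDiffOn_Ici a x hx), derivWithin_congr hf (hf hx)]
    exact congrFun (derivWithin_const (Ici a) 0) x
  · exact deriv_zero_of_not_differentiableAt hdiff

lemma contDiffAt_fst_of_uncurry (hu : ContDiffAt ℝ n (uncurry u) (t, z)) :
    ContDiffAt ℝ n (fun s => u s z) t :=
  hu.comp t (contDiffAt_id.prodMk contDiffAt_const)

lemma contDiffAt_snd_of_uncurry (hu : ContDiffAt ℝ n (uncurry u) (t, z)) :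
    ContDiffAt ℝ n (u t) z :=
  hu.comp z (contDiffAt_const.prodMk contDiffAt_id)

lemma contDiffAt_uncurry_deriv_snd (hu : ContDiffAt ℝ n (uncurry u) (t, z)) (hmn : m + 1 ≤ n) :
    ContDiffAt ℝ m (uncurry fun s => deriv (u s)) (t, z) :=
  (ContDiffAt.fderiv (f := fun p : ℝ × ℝ => u p.1) (g := Prod.snd)
    (hu.comp ((t, z), z) (contDiffAt_fst.fst.prodMk contDiffAt_snd)) contDiffAt_snd hmn).clm_apply
    contDiffAt_const

lemma contDiffAt_uncurry_deriv_fst (hu : ContDiffAt ℝ n (uncurry u) (t, z)) (hmn : m + 1 ≤ n) :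
    ContDiffAt ℝ m (uncurry fun s r => deriv (fun s' => u s' r) s) (t, z) :=
  (ContDiffAt.fderiv (f := fun (p : ℝ × ℝ) s => u s p.2) (g := Prod.fst)
    (hu.comp ((t, z), t) (contDiffAt_snd.prodMk contDiffAt_fst.snd)) contDiffAt_fst hmn).clm_apply
    contDiffAt_const

lemma deriv_comp_mk_left_eq_fderiv {F : ℝ × ℝ → E} (hF : DifferentiableAt ℝ F (t, z)) :
    deriv (fun s => F (s, z)) t = fderiv ℝ F (t, z) (1, 0) :=
  (hF.hasFDerivAt.comp_hasDerivAt t ((hasDerivAt_id t).prodMk (hasDerivAt_const t z))).deriv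

lemma deriv_comp_mk_right_eq_fderiv {F : ℝ × ℝ → E} (hF : DifferentiableAt ℝ F (t, z)) :
    deriv (fun r => F (t, r)) z = fderiv ℝ F (t, z) (0, 1) :=
  (hF.hasFDerivAt.comp_hasDerivAt z ((hasDerivAt_const z t).prodMk (hasDerivAt_id z))).deriv

lemma deriv_deriv_comm (hu : ContDiffAt ℝ 2 (uncurry u) (t, z)) :
    deriv (fun s => deriv (u s) z) t = deriv (fun r => deriv (fun s => u s r) t) z := by
  have near : ∀ᶠ p in 𝓝 (t, z), DifferentiableAt ℝ (uncurry u) p :=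
    (hu.eventually (by simp)).mono fun p hp => hp.differentiableAt (by simp)
  have hD : DifferentiableAt ℝ (fderiv ℝ (uncurry u)) (t, z) :=
    (hu.fderiv_right (m := 1) (by norm_num)).differentiableAt (by simp)
  have hDv (v : ℝ × ℝ) : DifferentiableAt ℝ (fun p => fderiv ℝ (uncurry u) p v) (t, z) :=
    hD.clm_apply (differentiableAt_const v)
  have second (v w : ℝ × ℝ) : fderiv ℝ (fun p => fderiv ℝ (uncurry u) p v) (t, z) w =
      fderiv ℝ (fderiv ℝ (uncurry u)) (t, z) w v := by
    simp [fderiv_clm_apply hD (differentiableAt_const v)]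
  have left : (fun s => deriv (u s) z) =ᶠ[𝓝 t] fun s => fderiv ℝ (uncurry u) (s, z) (0, 1) :=
    ((Continuous.prodMk_left z).continuousAt.eventually near).mono fun s hs =>
      deriv_comp_mk_right_eq_fderiv hs
  have right : (fun r => deriv (fun s => u s r) t) =ᶠ[𝓝 z]
      fun r => fderiv ℝ (uncurry u) (t, r) (1, 0) :=
    ((Continuous.prodMk_right t).continuousAt.eventually near).mono fun r hr =>
      deriv_comp_mk_left_eq_fderiv hr
  rw [left.deriv_eq, right.deriv_eq, deriv_comp_mk_left_eq_fderiv (hDv _),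
    deriv_comp_mk_right_eq_fderiv (hDv _), second, second]
  exact hu.isSymmSndFDerivAt (by simp) _ _

lemma hasDerivAt_intervalIntegral_of_contDiffAt {a b : ℝ}
    (hu : ∀ r ∈ [[a, b]], ContDiffAt ℝ 1 (uncurry u) (t, r)) :
    HasDerivAt (fun s => ∫ r in a..b, u s r) (∫ r in a..b, deriv (fun s => u s r) t) t := by
  have near : ∀ᶠ s in 𝓝 t, ∀ r ∈ [[a, b]], ContDiffAt ℝ 1 (uncurry u) (s, r) :=
    isCompact_uIcc.eventually_forall_of_forall_eventually fun r hr =>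
      (hu r hr).eventually (by simp)
  obtain ⟨ε, ε_pos, hε⟩ := Metric.nhds_basis_closedBall.mem_iff.1 near
  have cont_u {s : ℝ} (hs : ∀ r ∈ [[a, b]], ContDiffAt ℝ 1 (uncurry u) (s, r)) :
      ContinuousOn (u s) [[a, b]] := fun r hr =>
    (contDiffAt_snd_of_uncurry (hs r hr)).continuousAt.continuousWithinAt
  have cont_deriv {s r : ℝ} (hsr : ContDiffAt ℝ 1 (uncurry u) (s, r)) :
      ContDiffAt ℝ 0 (uncurry fun s r => deriv (fun s' => u s' r) s) (s, r) :=
    contDiffAt_uncurry_deriv_fst hsr (by simp)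
  have cont_deriv_t : ContinuousOn (fun r => deriv (fun s => u s r) t) [[a, b]] := fun r hr =>
    (contDiffAt_snd_of_uncurry (cont_deriv (hu r hr))).continuousAt.continuousWithinAt
  obtain ⟨C, hC⟩ := ((isCompact_closedBall t ε).prod
    (isCompact_uIcc (a := a) (b := b))).exists_bound_of_continuousOn fun p hp =>
      (cont_deriv (hε hp.1 p.2 hp.2)).continuousAt.continuousWithinAt
  exact (intervalIntegral.hasDerivAt_integral_of_dominated_loc_of_deriv_le
    (Metric.closedBall_mem_nhds t ε_pos)
    (near.mono fun s hs => (intervalIntegrable_iff.1 (cont_u hs).intervalIntegrable).1)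
    (cont_u hu).intervalIntegrable (intervalIntegrable_iff.1 cont_deriv_t.intervalIntegrable).1
    (.of_forall fun r hr s hs => hC (s, r) ⟨hs, uIoc_subset_uIcc hr⟩)
    (intervalIntegrable_const (c := C))
    (.of_forall fun r hr s hs => ((contDiffAt_fst_of_uncurry
      (hε hs r (uIoc_subset_uIcc hr))).differentiableAt (by simp)).hasDerivAt)).2

end PartialDerivatives

/-- The operator `L_c = ∂ₜ - ∂_z² + c/(1+t)`, applied to `u` at `(t,z)`. -/
def dampedHeatOp (c : ℝ) (u : ℝ → ℝ → ℝ) (t z : ℝ) : ℝ :=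
  deriv (fun s => u s z) t - deriv (deriv (u t)) z + c / (1 + t) * u t z

/-- The primitive `Φ(t,z) = ∫₀^z v(t,r) dr` in space vanishing at `z = 0`. It turns Neumann
solutions of the damped heat equation into Dirichlet solutions. -/
def spacePrimitive (v : ℝ → ℝ → ℝ) (t z : ℝ) : ℝ :=
  ∫ r in (0 : ℝ)..z, v t r

section DampedHeat

variable {c t z : ℝ} {m n : WithTop ℕ∞} {u v h : ℝ → ℝ → ℝ}

lemma dampedHeatOp_deriv (hu : ContDiffAt ℝ 3 (uncurry u) (t, z)) :
    dampedHeatOp c (fun s => deriv (u s)) t z = deriv (dampedHeatOp c u t) z := by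
  have hu_z : ContDiffAt ℝ 3 (u t) z := contDiffAt_snd_of_uncurry hu
  have diff_t : DifferentiableAt ℝ (fun r => deriv (fun s => u s r) t) z :=
    (contDiffAt_snd_of_uncurry
      (contDiffAt_uncurry_deriv_fst (m := 2) hu (by norm_num))).differentiableAt (by simp)
  have diff_zz : DifferentiableAt ℝ (deriv (deriv (u t))) z :=
    ((hu_z.derivWithin (m := 2) (by norm_num)).derivWithin (m := 1)
      (by norm_num)).differentiableAt (by simp)
  have expand : HasDerivAt (dampedHeatOp c u t) _ z :=
    (diff_t.hasDerivAt.sub diff_zz.hasDerivAt).add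
      ((hu_z.differentiableAt (by simp)).hasDerivAt.const_mul (c / (1 + t)))
  rw [expand.deriv, ← deriv_deriv_comm (hu.of_le (by norm_num)), dampedHeatOp]

lemma contDiffAt_uncurry_htilde (hu : ContDiffAt ℝ n (uncurry u) (t, z)) (hmn : m + 1 ≤ n)
    (ht : 1 + t ≠ 0) : ContDiffAt ℝ m (uncurry (htilde u)) (t, z) :=
  (contDiffAt_uncurry_deriv_snd hu hmn).add
    ((contDiffAt_snd.div (contDiffAt_const.mul (contDiffAt_const.add contDiffAt_fst))
      (mul_ne_zero two_ne_zero ht)).mul (hu.of_le (le_self_add.trans hmn)))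

lemma contDiff_htilde (hu : ContDiff ℝ n (u t)) (hmn : m + 1 ≤ n) : ContDiff ℝ m (htilde u t) :=
  (hu.of_le hmn).deriv'.add
    ((contDiff_id.div_const _).mul (hu.of_le (le_self_add.trans hmn)))

lemma hasDerivAt_htilde_time (ht : 1 + t ≠ 0) (hu : DifferentiableAt ℝ (fun s => u s z) t)
    (hu' : DifferentiableAt ℝ (fun s => deriv (u s) z) t) :
    HasDerivAt (fun s => htilde u s z)
      (deriv (fun s => deriv (u s) z) t +
        (-z / (2 * (1 + t) ^ 2) * u t z + z / (2 * (1 + t)) * deriv (fun s => u s z) t)) t := by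
  have coeff : HasDerivAt (fun s => z / (2 * (1 + s))) (-z / (2 * (1 + t) ^ 2)) t := by
    refine ((hasDerivAt_const t z).div (((hasDerivAt_id t).const_add 1).const_mul 2)
      (mul_ne_zero two_ne_zero ht)).congr_deriv ?_
    simp only [id]
    field_simp
    ring
  exact hu'.hasDerivAt.add (coeff.mul hu.hasDerivAt)

lemma deriv_htilde (hu : ContDiff ℝ 2 (u t)) :
    deriv (htilde u t) = fun z => deriv (deriv (u t)) z +
      (1 / (2 * (1 + t)) * u t z + z / (2 * (1 + t)) * deriv (u t) z) := by
  funext z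
  exact ((hu.differentiable_deriv_two z).hasDerivAt.add (((hasDerivAt_id z).div_const _).mul
    (hu.differentiable (by simp) z).hasDerivAt)).deriv

lemma deriv_deriv_htilde (hu : ContDiff ℝ 3 (u t)) :
    deriv (deriv (htilde u t)) z = deriv (deriv (deriv (u t))) z +
      (2 * (1 / (2 * (1 + t))) * deriv (u t) z + z / (2 * (1 + t)) * deriv (deriv (u t)) z) := by
  have hu' : ContDiff ℝ 2 (deriv (u t)) := (hu.of_le (by norm_num)).deriv'
  have hd : HasDerivAt (u t) (deriv (u t) z) z := (hu.differentiable (by simp) z).hasDerivAt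
  have hd' : HasDerivAt (deriv (u t)) (deriv (deriv (u t)) z) z :=
    (hu'.differentiable (by simp) z).hasDerivAt
  rw [deriv_htilde (hu.of_le (by norm_num))]
  refine (((hu'.differentiable_deriv_two z).hasDerivAt.add ((hd.const_mul _).add
    (((hasDerivAt_id z).div_const _).mul hd'))).congr_deriv ?_).deriv
  simp only [id]
  ring

/-- The commutator identity `L_{c+1} A = A L_c`, with `∂_z L_c u` written as `L_c ∂_z u`: in this
form it needs no joint regularity of `u`. -/
lemma dampedHeatOp_htilde (ht : 1 + t ≠ 0) (hu : DifferentiableAt ℝ (fun s => u s z) t)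
    (hu' : DifferentiableAt ℝ (fun s => deriv (u s) z) t) (hu_z : ContDiff ℝ 3 (u t)) :
    dampedHeatOp (c + 1) (htilde u) t z =
      dampedHeatOp c (fun s => deriv (u s)) t z + z / (2 * (1 + t)) * dampedHeatOp c u t z := by
  rw [dampedHeatOp, (hasDerivAt_htilde_time ht hu hu').deriv, deriv_deriv_htilde hu_z]
  simp only [dampedHeatOp, htilde]
  field_simp
  ring

lemma deriv_htilde_eq_zero_of_dirichlet (ht : 0 ≤ t) (hu : ContDiff ℝ 2 (u t))
    (heq : dampedHeatOp c u t 0 = 0) (hbc : ∀ s ≥ 0, u s 0 = 0) : deriv (htilde u t) 0 = 0 := by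
  have time_deriv : deriv (fun s => u s 0) t = 0 := deriv_eq_zero_of_eqOn_Ici hbc ht
  have space_deriv : deriv (deriv (u t)) 0 = 0 := by
    simpa [dampedHeatOp, time_deriv, hbc t ht] using heq
  simp [deriv_htilde hu, space_deriv, hbc t ht]

lemma dampedHeatOp_htilde_eq_zero (hu : ContDiff ℝ 3 (uncurry u))
    (heq : ∀ r ≥ 0, dampedHeatOp c u t r = 0) (ht : 1 + t ≠ 0) (hz : 0 ≤ z) :
    dampedHeatOp (c + 1) (htilde u) t z = 0 := by
  have heq' : dampedHeatOp c (fun s => deriv (u s)) t z = 0 := by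
    rw [dampedHeatOp_deriv hu.contDiffAt]
    exact deriv_eq_zero_of_eqOn_Ici heq hz
  have diff_t : DifferentiableAt ℝ (fun s => u s z) t :=
    (contDiffAt_fst_of_uncurry hu.contDiffAt).differentiableAt (by simp)
  have diff_zt : DifferentiableAt ℝ (fun s => deriv (u s) z) t :=
    (contDiffAt_fst_of_uncurry (contDiffAt_uncurry_deriv_snd (m := 2) hu.contDiffAt
      (by norm_num))).differentiableAt (by simp)
  rw [dampedHeatOp_htilde ht diff_t diff_zt (hu.comp (contDiff_prodMk_right t)), heq', heq z hz]
  simp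

lemma hasDerivAt_spacePrimitive (hv : Continuous (v t)) :
    HasDerivAt (spacePrimitive v t) (v t z) z :=
  (hv.integral_hasStrictDerivAt 0 z).hasDerivAt

lemma deriv_spacePrimitive (hv : Continuous (v t)) : deriv (spacePrimitive v t) = v t :=
  funext fun _ => (hasDerivAt_spacePrimitive hv).deriv

lemma contDiff_spacePrimitive {n : ℕ} (hv : ContDiff ℝ n (v t)) :
    ContDiff ℝ (n + 1) (spacePrimitive v t) :=
  contDiff_succ_iff_deriv.2
    ⟨fun _ => (hasDerivAt_spacePrimitive hv.continuous).differentiableAt, by simp,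
      by rwa [deriv_spacePrimitive hv.continuous]⟩

lemma bigH_eq_htilde_spacePrimitive (hh : ∀ t, Continuous (htilde h t)) :
    bigH h = htilde (spacePrimitive (htilde h)) := by
  funext t z
  simp only [bigH, htilde.eq_1 (spacePrimitive _), deriv_spacePrimitive (hh t), spacePrimitive]

lemma dampedHeatOp_spacePrimitive (hv : ∀ r ∈ [[0, z]], ContDiffAt ℝ 1 (uncurry v) (t, r))
    (hv_z : ContDiff ℝ 2 (v t)) :
    dampedHeatOp c (spacePrimitive v) t z =
      (∫ r in (0 : ℝ)..z, dampedHeatOp c v t r) - deriv (v t) 0 := by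
  have cont_t : ContinuousOn (fun r => deriv (fun s => v s r) t) [[0, z]] := fun r hr =>
    (contDiffAt_snd_of_uncurry (contDiffAt_uncurry_deriv_fst (m := 0) (hv r hr)
      (by simp))).continuousAt.continuousWithinAt
  have cont_zz : Continuous (deriv (deriv (v t))) :=
    (hv_z.of_le (by norm_num)).deriv'.continuous_deriv_one
  have time_deriv : deriv (fun s => spacePrimitive v s z) t =
      ∫ r in (0 : ℝ)..z, deriv (fun s => v s r) t :=
    (hasDerivAt_intervalIntegral_of_contDiffAt hv).deriv
  have space_deriv : ∫ r in (0 : ℝ)..z, deriv (deriv (v t)) r = deriv (v t) z - deriv (v t) 0 :=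
    intervalIntegral.integral_deriv_eq_sub (fun r _ => hv_z.differentiable_deriv_two r)
      (cont_zz.intervalIntegrable _ _)
  simp only [dampedHeatOp]
  rw [intervalIntegral.integral_add
      (cont_t.intervalIntegrable.sub (cont_zz.intervalIntegrable _ _))
      ((hv_z.continuous.const_mul _).intervalIntegrable _ _),
    intervalIntegral.integral_sub cont_t.intervalIntegrable (cont_zz.intervalIntegrable _ _),
    intervalIntegral.integral_const_mul, space_deriv, time_deriv,
    deriv_spacePrimitive hv_z.continuous, spacePrimitive]
  ring

lemma dampedHeatOp_spacePrimitive_eq_zero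
    (hv : ∀ r ≥ 0, ContDiffAt ℝ 1 (uncurry v) (t, r)) (hv_z : ContDiff ℝ 2 (v t))
    (heq : ∀ r ≥ 0, dampedHeatOp c v t r = 0) (hbc : deriv (v t) 0 = 0) (hz : 0 ≤ z) :
    dampedHeatOp c (spacePrimitive v) t z = 0 := by
  have nonneg {r : ℝ} (hr : r ∈ [[0, z]]) : 0 ≤ r := (uIcc_of_le hz ▸ hr).1
  rw [dampedHeatOp_spacePrimitive (fun r hr => hv r (nonneg hr)) hv_z, hbc,
    intervalIntegral.integral_congr fun r hr => heq r (nonneg hr)]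
  simp

lemma dampedHeatOp_htilde_spacePrimitive_eq_zero
    (hv : ∀ r ≥ 0, ContDiffAt ℝ 1 (uncurry v) (t, r)) (hv_z : ∀ s, ContDiff ℝ 2 (v s))
    (heq : ∀ r ≥ 0, dampedHeatOp c v t r = 0) (hbc : deriv (v t) 0 = 0)
    (ht : 1 + t ≠ 0) (hz : 0 ≤ z) : dampedHeatOp (c + 1) (htilde (spacePrimitive v)) t z = 0 := by
  have deriv_eq : (fun s => deriv (spacePrimitive v s)) = v :=
    funext fun s => deriv_spacePrimitive (hv_z s).continuous
  have diff_t : DifferentiableAt ℝ (fun s => spacePrimitive v s z) t :=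
    (hasDerivAt_intervalIntegral_of_contDiffAt fun r hr =>
      hv r (uIcc_of_le hz ▸ hr).1).differentiableAt
  have diff_zt : DifferentiableAt ℝ (fun s => deriv (spacePrimitive v s) z) t := by
    simpa only [congrFun deriv_eq] using
      (contDiffAt_fst_of_uncurry (hv z hz)).differentiableAt (by simp)
  have regular : ContDiff ℝ 3 (spacePrimitive v t) :=
    contDiff_spacePrimitive (n := 2) (hv_z t)
  rw [dampedHeatOp_htilde ht diff_t diff_zt regular, deriv_eq, heq z hz,
    dampedHeatOp_spacePrimitive_eq_zero hv (hv_z t) heq hbc hz]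
  simp

end DampedHeat

theorem statement18_general (c : ℝ) (h : ℝ → ℝ → ℝ) (hsm : ContDiff ℝ 3 (uncurry h))
    (heat : ∀ t ≥ 0, ∀ z ≥ 0, dampedHeatOp c h t z = 0) (hbc : ∀ t ≥ 0, h t 0 = 0) :
    (∀ t ≥ 0, ∀ z ≥ 0, dampedHeatOp (c + 1) (htilde h) t z = 0)
      ∧ (∀ t ≥ 0, deriv (htilde h t) 0 = 0)
      ∧ (∀ t ≥ 0, ∀ z ≥ 0, dampedHeatOp (c + 2) (bigH h) t z = 0)
      ∧ (∀ t ≥ 0, deriv (bigH h t) 0 = 0) := by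
  have hsm_z (t : ℝ) : ContDiff ℝ 3 (h t) := hsm.comp (contDiff_prodMk_right t)
  have htilde_z (t : ℝ) : ContDiff ℝ 2 (htilde h t) :=
    contDiff_htilde (hsm_z t) (by norm_num)
  have htilde_joint {t : ℝ} (ht : t ≥ 0) (z : ℝ) : ContDiffAt ℝ 1 (uncurry (htilde h)) (t, z) :=
    contDiffAt_uncurry_htilde hsm.contDiffAt (by norm_num) (by positivity)
  have eq_htilde : ∀ t ≥ 0, ∀ z ≥ 0, dampedHeatOp (c + 1) (htilde h) t z = 0 :=
    fun t ht z hz => dampedHeatOp_htilde_eq_zero hsm (heat t ht) (by positivity) hz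
  have neumann_htilde : ∀ t ≥ 0, deriv (htilde h t) 0 = 0 := fun t ht =>
    deriv_htilde_eq_zero_of_dirichlet ht ((hsm_z t).of_le (by norm_num)) (heat t ht 0 le_rfl) hbc
  rw [bigH_eq_htilde_spacePrimitive fun t => (htilde_z t).continuous]
  refine ⟨eq_htilde, neumann_htilde, fun t ht z hz => ?_, fun t ht => ?_⟩
  · rw [← one_add_one_eq_two, ← add_assoc]
    exact dampedHeatOp_htilde_spacePrimitive_eq_zero (fun r _ => htilde_joint ht r) htilde_z
      (eq_htilde t ht) (neumann_htilde t ht) (by positivity) hz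
  · exact deriv_htilde_eq_zero_of_dirichlet ht
      ((contDiff_spacePrimitive (n := 2) (htilde_z t)).of_le (by norm_num))
      (dampedHeatOp_spacePrimitive_eq_zero (fun r _ => htilde_joint ht r) (htilde_z t)
        (eq_htilde t ht) (neumann_htilde t ht) le_rfl)
      fun s _ => intervalIntegral.integral_same

/-- If `h` is a smooth solution of the heat equation on the half-line with Dirichlet
boundary condition, then `h̃` satisfies `(∂ₜ − ∂_z² + 1/(1+t)) h̃ = 0` with Neumann
boundary condition, and `H` satisfies `(∂ₜ − ∂_z² + 2/(1+t)) H = 0` with Neumann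
boundary condition. -/
theorem statement18 (h : ℝ → ℝ → ℝ)
    (hsm : ContDiff ℝ (⊤ : ℕ∞) fun p : ℝ × ℝ => h p.1 p.2)
    (heat : ∀ t ≥ (0 : ℝ), ∀ z ≥ (0 : ℝ),
      deriv (fun s => h s z) t = deriv (deriv (h t)) z)
    (hbc : ∀ t ≥ (0 : ℝ), h t 0 = 0) :
    (∀ t > (0 : ℝ), ∀ z > (0 : ℝ),
        deriv (fun s => htilde h s z) t - deriv (deriv (htilde h t)) z
          + 1 / (1 + t) * htilde h t z = 0)
      ∧ (∀ t ≥ (0 : ℝ), deriv (htilde h t) 0 = 0)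
      ∧ (∀ t > (0 : ℝ), ∀ z > (0 : ℝ),
          deriv (fun s => bigH h s z) t - deriv (deriv (bigH h t)) z
            + 2 / (1 + t) * bigH h t z = 0)
      ∧ (∀ t ≥ (0 : ℝ), deriv (bigH h t) 0 = 0) := by
  have general := statement18_general 0 h (contDiff_infty.1 hsm 3)
    (by simpa [dampedHeatOp, sub_eq_zero] using heat) hbc
  simp only [dampedHeatOp, zero_add] at general
  exact ⟨fun t ht z hz => general.1 t ht.le z hz.le, general.2.1,
    fun t ht z hz => general.2.2.1 t ht.le z hz.le, general.2.2.2⟩
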